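/- arXiv:math/0603050 — 5 statements merged into one kernel-verified Lean document; each statement's English description precedes it below -/
import Mathlib

section
/- Let D be a triangulated category (pretriangulated, with shift functors ⟦n⟧ for n ∈ ℤ). Let d be an integer and suppose given distinguished triangles X ⟶f Y ⟶g X⟦-d⟧ ⟶ X⟦1⟧ and Y ⟶u X ⟶v T ⟶ Y⟦1⟧ such that u ∘ f = 𝟙_X. Then T ≅ X⟦1 - d⟧. -/
open CategoryTheory Pretriangulated

/-- In a pretriangulated category, given distinguished triangles
`X ⟶ Y ⟶ X⟦-d⟧ ⟶ X⟦1⟧` and `Y ⟶ X ⟶ T ⟶ Y⟦1⟧` such that the composite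
`X ⟶ Y ⟶ X` is the identity, we have `T ≅ X⟦1 - d⟧`. -/
theorem stmt_0 {D : Type*} [Category D] [Limits.HasZeroObject D] [HasShift D ℤ]
    [Preadditive D] [∀ n : ℤ, (shiftFunctor D n).Additive] [Pretriangulated D]
    (d : ℤ) (X Y T : D) (f : X ⟶ Y) (g : Y ⟶ X⟦(-d : ℤ)⟧) (w₁ : X⟦(-d : ℤ)⟧ ⟶ X⟦(1 : ℤ)⟧)
    (u : Y ⟶ X) (v : X ⟶ T) (w₂ : T ⟶ Y⟦(1 : ℤ)⟧)
    (hT₁ : Triangle.mk f g w₁ ∈ distTriang D)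
    (hT₂ : Triangle.mk u v w₂ ∈ distTriang D)
    (huf : f ≫ u = 𝟙 X) :
    Nonempty (T ≅ X⟦(1 - d : ℤ)⟧) := by
  have hv : v = 0 := by
    have h : u ≫ v = 0 := comp_distTriang_mor_zero₁₂ _ hT₂
    rw [← Category.id_comp v, ← huf, Category.assoc, h, Limits.comp_zero]
  have hfg : f ≫ g = 0 := comp_distTriang_mor_zero₁₂ _ hT₁
  have hwu : w₂ ≫ u⟦(1 : ℤ)⟧' = 0 := comp_distTriang_mor_zero₃₁ _ hT₂
  have hw : w₁ = 0 := by
    have h : w₁ ≫ f⟦(1 : ℤ)⟧' = 0 := comp_distTriang_mor_zero₃₁ _ hT₁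
    rw [← Category.comp_id w₁, ← CategoryTheory.Functor.map_id, ← huf, Functor.map_comp, ← Category.assoc, h,
      Limits.zero_comp]
  have hg : Epi g := Triangle.epi₂ _ hT₁ hw
  have hm : Mono w₂ := Triangle.mono₃ _ hT₂ hv
  obtain ⟨s, hs⟩ : ∃ s : X⟦(-d : ℤ)⟧ ⟶ Y, 𝟙 Y - u ≫ f = g ≫ s :=
    Triangle.yoneda_exact₂ _ hT₁ (𝟙 Y - u ≫ f) (by
      change f ≫ (𝟙 Y - u ≫ f) = 0
      rw [Preadditive.comp_sub, ← Category.assoc, huf]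
      simp)
  have hsu : s ≫ u = 0 := by
    rw [← cancel_epi g, ← Category.assoc, ← hs]
    simp [Preadditive.sub_comp, huf]
  have hsg : s ≫ g = 𝟙 _ := by
    rw [← cancel_epi g, ← Category.assoc, ← hs]
    simp [Preadditive.sub_comp, hfg]
  obtain ⟨t, ht⟩ : ∃ t : X⟦(-d : ℤ)⟧⟦(1 : ℤ)⟧ ⟶ T, s⟦(1 : ℤ)⟧' = t ≫ w₂ :=
    Triangle.coyoneda_exact₁ _ hT₂ (s⟦(1 : ℤ)⟧') (by
      change s⟦(1 : ℤ)⟧' ≫ u⟦(1 : ℤ)⟧' = 0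
      rw [← Functor.map_comp, hsu, Functor.map_zero])
  have e : T ≅ X⟦(-d : ℤ)⟧⟦(1 : ℤ)⟧ :=
    { hom := w₂ ≫ g⟦(1 : ℤ)⟧'
      inv := t
      hom_inv_id := by
        rw [← cancel_mono w₂, Category.assoc, Category.assoc, ← ht, ← Functor.map_comp, ← hs,
          Functor.map_sub, Functor.map_comp, Preadditive.comp_sub, ← Category.assoc, hwu]
        simp
      inv_hom_id := by
        rw [← Category.assoc, ← ht, ← Functor.map_comp, hsg, CategoryTheory.Functor.map_id] }
  exact ⟨e ≪≫ ((shiftFunctorAdd' D (-d) 1 (1 - d) (by ring)).app X).symm⟩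
end

section
/- Let A be a ℂ-linear abelian category whose Ext-groups are finite-dimensional ℂ-vector spaces, and let E be an object with dim_ℂ Hom(E, E) = dim_ℂ Ext¹(E, E) = dim_ℂ Ext²(E, E) = 1. Let m ≥ 1 and let E_0 = E, E_1, …, E_m be objects equipped, for each 1 ≤ n ≤ m, with: (i) a short exact sequence σ_n : 0 → E_{n-1} → E_n → E → 0, where σ_1 is non-split; (ii) a morphism of short exact sequences from σ_n to σ_1 whose right vertical map is 𝟙_E (with left vertical map s_n : E_{n-1} → E); (iii) a non-split short exact sequence τ_n : 0 → E → E_n → E_{n-1} → 0 whose class e_n ∈ Ext¹(E_{n-1}, E) satisfies η_n(e_n) = 0 for n < m and η_m(e_m) ≠ 0, where η_n : Ext¹(E_{n-1}, E) → Ext²(E, E) is the connecting homomorphism of σ_n for the functor Hom(−, E). Then for all 0 ≤ n ≤ m one has dim_ℂ Hom(E_n, E) = 1; moreover dim_ℂ Ext¹(E_n, E) = 1 for all n < m, and Ext¹(E_m, E) = 0. -/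
open CategoryTheory CategoryTheory.Abelian

universe w v u

section Helpers

variable {A : Type u} [Category.{v} A] [Abelian A] [Linear ℂ A] [HasExt.{w} A]

/-- The scalar multiplication by `c : ℂ` on Ext-groups of a `ℂ`-linear abelian category,
given by composition with `c • 𝟙`. -/
noncomputable def extSMul (c : ℂ) {X Y : A} {n : ℕ} (x : Ext X Y n) : Ext X Y n :=
  (Ext.mk₀ (c • 𝟙 X)).comp x (zero_add n)

/-- `Ext X Y n` is a one-dimensional `ℂ`-vector space: there is a nonzero element
spanning it. -/
def ExtIsOneDim (X Y : A) (n : ℕ) : Prop :=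
  ∃ e : Ext X Y n, e ≠ 0 ∧ ∀ x : Ext X Y n, ∃ c : ℂ, x = extSMul c e

/-- `Ext X Y n` is a finite-dimensional `ℂ`-vector space: it is spanned by finitely
many elements. -/
def ExtIsFinDim (X Y : A) (n : ℕ) : Prop :=
  ∃ (k : ℕ) (b : Fin k → Ext X Y n),
    ∀ x : Ext X Y n, ∃ c : Fin k → ℂ, x = ∑ i, extSMul (c i) (b i)

end Helpers

section MyHelpers

variable {A : Type u} [Category.{v} A] [Abelian A] [Linear ℂ A] [HasExt.{w} A]

lemma extSMul_eq_smul (c : ℂ) {X Y : A} {n : ℕ} (x : Ext X Y n) : extSMul c x = c • x := by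
  simp [extSMul, Ext.mk₀_smul]

lemma extIsOneDim_iff (X Y : A) (n : ℕ) :
    ExtIsOneDim X Y n ↔ Module.finrank ℂ (Ext X Y n) = 1 := by
  rw [finrank_eq_one_iff']
  simp only [ExtIsOneDim, extSMul_eq_smul, eq_comm (b := _ • _)]

lemma extClass_ne_zero {S : ShortComplex A} (hS : S.ShortExact)
    (h : ¬ Nonempty S.Splitting) : hS.extClass ≠ 0 := by
  intro h0
  apply h
  obtain ⟨x, hx⟩ := Ext.covariant_sequence_exact₃ S.X₃ hS (Ext.mk₀ (𝟙 S.X₃)) (zero_add 1)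
    (by simp [h0])
  obtain ⟨f, rfl⟩ := (Ext.mk₀_bijective _ _).2 x
  rw [Ext.mk₀_comp_mk₀] at hx
  have := hS.mono_f
  exact ⟨ShortComplex.Splitting.ofExactOfSection _ hS.exact f ((Ext.mk₀_bijective _ _).1 hx) this⟩

lemma step_lemma {S : ShortComplex A} (hS : S.ShortExact) (E : A)
    (h3 : Module.finrank ℂ (S.X₃ ⟶ E) = 1) (h31 : Module.finrank ℂ (Ext S.X₃ E 1) = 1)
    (h1 : Module.finrank ℂ (S.X₁ ⟶ E) = 1) (s : S.X₁ ⟶ E)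
    (hs : hS.extClass.comp (Ext.mk₀ s) (add_zero 1) ≠ 0) :
    Module.finrank ℂ (S.X₂ ⟶ E) = 1 ∧
      ∀ x : Ext S.X₂ E 1, (Ext.mk₀ S.f).comp x (zero_add 1) = 0 → x = 0 := by
  have := hS.epi_g
  have hs0 : s ≠ 0 := by rintro rfl; simp at hs
  constructor
  · rw [← h3]
    refine (LinearEquiv.finrank_eq
      (LinearEquiv.ofBijective (Linear.leftComp ℂ E S.g) ⟨?_, ?_⟩)).symm
    · intro a b hab
      exact (cancel_epi S.g).1 hab
    · intro f
      obtain ⟨c, hcs⟩ := (finrank_eq_one_iff_of_nonzero' s hs0).1 h1 (S.f ≫ f)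
      have h0 : hS.extClass.comp (Ext.mk₀ (S.f ≫ f)) (add_zero 1) = 0 := by
        rw [← Ext.mk₀_comp_mk₀]
        exact hS.extClass_comp_assoc _
      rw [← hcs, Ext.mk₀_smul, Ext.comp_smul] at h0
      have hc0 : c = 0 := (smul_eq_zero.1 h0).resolve_right hs
      rw [hc0, zero_smul] at hcs
      exact ⟨hS.exact.desc f hcs.symm, hS.exact.g_desc f hcs.symm⟩
  · intro x hx
    obtain ⟨y, rfl⟩ := Ext.contravariant_sequence_exact₂ hS E x hx
    obtain ⟨c, rfl⟩ := (finrank_eq_one_iff_of_nonzero' _ hs).1 h31 y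
    rw [Ext.comp_smul, hS.comp_extClass_assoc, smul_zero]

end MyHelpers

/-- Let `A` be a `ℂ`-linear abelian category with finite-dimensional
Ext-groups and `E = F 0` an object with `dim Hom(E,E) = dim Ext¹(E,E) = dim Ext²(E,E) = 1`.
Given objects `E_n = F n` (`0 ≤ n ≤ m`, `m ≥ 1`) together with, for each `1 ≤ n ≤ m`
(indexed here by `j = n - 1 : Fin m`):
(i) short exact sequences `σ_n : 0 → E_{n-1} → E_n → E → 0` with `σ_1` non-split;
(ii) morphisms of short exact sequences `σ_n → σ_1` with identity right vertical map;
(iii) non-split short exact sequences `τ_n : 0 → E → E_n → E_{n-1} → 0` whose classes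
`e_n ∈ Ext¹(E_{n-1},E)` satisfy `η_n (e_n) = 0` for `n < m` and `η_m (e_m) ≠ 0`, where
`η_n : Ext¹(E_{n-1},E) → Ext²(E,E)` is the connecting homomorphism of `σ_n` for `Hom(-,E)`.
Then `dim Hom(E_n,E) = 1` for all `n ≤ m`, `dim Ext¹(E_n,E) = 1` for `n < m`, and
`Ext¹(E_m,E) = 0`. -/
theorem stmt_3 {A : Type u} [Category.{v} A] [Abelian A] [Linear ℂ A] [HasExt.{w} A]
    (hfd : ∀ (X Y : A) (n : ℕ), ExtIsFinDim X Y n)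
    (m : ℕ) (hm : 0 < m) (F : ℕ → A)
    (hHom : Module.finrank ℂ (F 0 ⟶ F 0) = 1)
    (hExt1 : ExtIsOneDim (F 0) (F 0) 1)
    (hExt2 : ExtIsOneDim (F 0) (F 0) 2)
    -- (i) the short exact sequences σ_{j+1} : 0 → F j → F (j+1) → F 0 → 0
    (ι : ∀ j : Fin m, F j ⟶ F ((j : ℕ) + 1))
    (π : ∀ j : Fin m, F ((j : ℕ) + 1) ⟶ F 0)
    (hc : ∀ j : Fin m, ι j ≫ π j = 0)
    (hσ : ∀ j : Fin m, (ShortComplex.mk (ι j) (π j) (hc j)).ShortExact)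
    -- σ_1 is non-split
    (hσ₁ : ¬ Nonempty (ShortComplex.mk (ι ⟨0, hm⟩) (π ⟨0, hm⟩) (hc ⟨0, hm⟩)).Splitting)
    -- (ii) morphisms of short exact sequences from σ_{j+1} to σ_1 with right vertical 𝟙
    (s : ∀ j : Fin m, F j ⟶ F 0)
    (r : ∀ j : Fin m, F ((j : ℕ) + 1) ⟶ F 1)
    (hsq₁ : ∀ j : Fin m, ι j ≫ r j = s j ≫ ι ⟨0, hm⟩)
    (hsq₂ : ∀ j : Fin m, r j ≫ π ⟨0, hm⟩ = π j)
    -- (iii) the non-split short exact sequences τ_{j+1} : 0 → F 0 → F (j+1) → F j → 0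
    (ι' : ∀ j : Fin m, F 0 ⟶ F ((j : ℕ) + 1))
    (π' : ∀ j : Fin m, F ((j : ℕ) + 1) ⟶ F j)
    (hc' : ∀ j : Fin m, ι' j ≫ π' j = 0)
    (hτ : ∀ j : Fin m, (ShortComplex.mk (ι' j) (π' j) (hc' j)).ShortExact)
    (hτns : ∀ j : Fin m, ¬ Nonempty (ShortComplex.mk (ι' j) (π' j) (hc' j)).Splitting)
    -- the obstructions η_{j+1}(e_{j+1}) vanish for j + 1 < m and are nonzero for j + 1 = m
    (hobs : ∀ j : Fin m, (j : ℕ) + 1 < m →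
      (hσ j).extClass.comp (hτ j).extClass (by norm_num) = (0 : Ext (F 0) (F 0) 2))
    (hobsm : ∀ j : Fin m, (j : ℕ) + 1 = m →
      (hσ j).extClass.comp (hτ j).extClass (by norm_num) ≠ (0 : Ext (F 0) (F 0) 2)) :
    (∀ n ≤ m, Module.finrank ℂ (F n ⟶ F 0) = 1) ∧
    (∀ n < m, ExtIsOneDim (F n) (F 0) 1) ∧
    (∀ x : Ext (F m) (F 0) 1, x = 0) := by
  have hE1 := (extIsOneDim_iff _ _ _).1 hExt1
  have hδ : ∀ j : Fin m, (hσ j).extClass.comp (Ext.mk₀ (s j)) (add_zero 1) ≠ 0 := by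
    intro j
    have h := ShortComplex.ShortExact.extClass_naturality (hσ j) (hσ ⟨0, hm⟩)
      { τ₁ := s j
        τ₂ := r j
        τ₃ := 𝟙 (F 0)
        comm₁₂ := (hsq₁ j).symm
        comm₂₃ := by simpa using hsq₂ j }
    dsimp only at h
    rw [h]
    have h2 := extClass_ne_zero (hσ ⟨0, hm⟩) hσ₁
    intro h3
    exact h2 (by rw [← h3]; exact (Ext.mk₀_id_comp _).symm)
  have hτ0 : ∀ j : Fin m, (hτ j).extClass ≠ 0 := fun j => extClass_ne_zero (hτ j) (hτns j)
  have main : ∀ n < m, Module.finrank ℂ (F n ⟶ F 0) = 1 ∧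
      Module.finrank ℂ (Ext (F n) (F 0) 1) = 1 := by
    intro n
    induction n with
    | zero => exact fun _ => ⟨hHom, hE1⟩
    | succ n ih =>
      intro hn
      obtain ⟨ih0, ih1⟩ := ih (by omega)
      let j : Fin m := ⟨n, by omega⟩
      obtain ⟨g0, g1⟩ := step_lemma (hσ j) (F 0) hHom hE1 ih0 (s j) (hδ j)
      refine ⟨g0, ?_⟩
      refine Eq.trans (LinearEquiv.finrank_eq (LinearEquiv.ofBijective
        ((Ext.mk₀ (ι j)).precompOfLinear ℂ (F 0) (zero_add 1)) ⟨?_, ?_⟩)) ih1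
      · rw [← LinearMap.ker_eq_bot, LinearMap.ker_eq_bot']
        exact g1
      · intro y
        obtain ⟨c, rfl⟩ := (finrank_eq_one_iff_of_nonzero' _ (hτ0 j)).1 ih1 y
        refine Ext.contravariant_sequence_exact₁ (hσ j) (F 0) (n₁ := 2) _ (by norm_num) ?_
        rw [Ext.comp_smul]
        exact (congrArg (c • ·) (hobs j hn)).trans (smul_zero c)
  obtain ⟨k, rfl⟩ : ∃ k, m = k + 1 := ⟨m - 1, by omega⟩
  obtain ⟨ih0, ih1⟩ := main k (by omega)
  let j : Fin (k + 1) := ⟨k, by omega⟩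
  obtain ⟨g0, g1⟩ := step_lemma (hσ j) (F 0) hHom hE1 ih0 (s j) (hδ j)
  refine ⟨fun n hn => ?_, fun n hn => (extIsOneDim_iff _ _ _).2 (main n hn).2, fun x => ?_⟩
  · rcases hn.lt_or_eq with h | rfl
    · exact (main n h).1
    · exact g0
  · apply g1
    obtain ⟨c, hx⟩ := (finrank_eq_one_iff_of_nonzero' _ (hτ0 j)).1 ih1
      ((Ext.mk₀ (ι j)).comp x (zero_add 1))
    have h0 : (hσ j).extClass.comp ((Ext.mk₀ (ι j)).comp x (zero_add 1))
        (show 1 + 1 = 2 by norm_num) = 0 := (hσ j).extClass_comp_assoc x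
    rw [← hx, Ext.comp_smul] at h0
    have hc0 : c = 0 := (smul_eq_zero.1 h0).resolve_right (hobsm j rfl)
    rw [hc0, zero_smul] at hx
    exact hx.symm
end

section
/- Let A be a ℂ-linear abelian category whose Ext-groups are finite-dimensional ℂ-vector spaces, and let E be an object with dim_ℂ Hom(E, E) = dim_ℂ Ext¹(E, E) = dim_ℂ Ext²(E, E) = 1. Let m ≥ 1 and let E_0 = E, E_1, …, E_m be objects equipped, for each 1 ≤ n ≤ m, with: (i) a short exact sequence τ_n : 0 → E → E_n → E_{n-1} → 0, where τ_1 is non-split; (ii) a morphism of short exact sequences from τ_1 to τ_n whose left vertical map is 𝟙_E; (iii) a non-split short exact sequence σ_n : 0 → E_{n-1} → E_n → E → 0 whose class e'_n ∈ Ext¹(E, E_{n-1}) satisfies η'_n(e'_n) = 0 for n < m and η'_m(e'_m) ≠ 0, where η'_n : Ext¹(E, E_{n-1}) → Ext²(E, E) is the connecting homomorphism of τ_n for the functor Hom(E, −). Then dim_ℂ Hom(E, E_m) = 1 and Ext¹(E, E_m) = 0. -/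
open CategoryTheory CategoryTheory.Abelian

universe w v u

theorem aux_splitting {A : Type u} [Category.{v} A] [Abelian A] [HasExt.{w} A]
    {S : ShortComplex A} (hS : S.ShortExact) (h : hS.extClass = 0) : Nonempty S.Splitting := by
  obtain ⟨x, hx⟩ := Ext.covariant_sequence_exact₃ S.X₃ hS (Ext.mk₀ (𝟙 S.X₃)) (zero_add 1)
    (by rw [h, Ext.comp_zero])
  obtain ⟨s, rfl⟩ := (Ext.mk₀_bijective _ _).2 x
  rw [Ext.mk₀_comp_mk₀] at hx
  have hs := (Ext.mk₀_bijective _ _).1 hx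
  have := hS.mono_f
  exact ⟨ShortComplex.Splitting.ofExactOfSection S hS.exact s hs hS.mono_f⟩

/-- One induction step, in the long exact sequence of `0 → E → Y → X → 0`. -/
theorem aux_step {A : Type u} [Category.{v} A] [Abelian A] [Linear ℂ A] [HasExt.{w} A]
    {E X Y : A} (i : E ⟶ Y) (p : Y ⟶ X) (hc : i ≫ p = 0)
    (hS : (ShortComplex.mk i p hc).ShortExact) (t : E ⟶ X)
    (ht : (Ext.mk₀ t).comp hS.extClass (zero_add 1) ≠ 0)
    (hHom : Module.finrank ℂ (E ⟶ E) = 1)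
    (hE1 : ∀ x y : Ext E E 1, x ≠ 0 → ∃ c : ℂ, y = c • x)
    (hX : Module.finrank ℂ (E ⟶ X) = 1) :
    Module.finrank ℂ (E ⟶ Y) = 1 ∧
    ∀ x : Ext E Y 1, x.comp (Ext.mk₀ p) (add_zero 1) = 0 → x = 0 := by
  have := hS.mono_f
  constructor
  · have ht0 : t ≠ 0 := by
      rintro rfl
      simp at ht
    have hbij : Function.Bijective (Linear.rightComp ℂ E i) := by
      constructor
      · intro a b hab
        have hm : Mono i := hS.mono_f
        exact (cancel_mono i).1 hab
      · intro f
        obtain ⟨c, hcf⟩ := (finrank_eq_one_iff_of_nonzero' t ht0).1 hX (f ≫ p)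
        have h0 : (Ext.mk₀ (f ≫ p)).comp hS.extClass (zero_add 1) = 0 := by
          rw [← Ext.mk₀_comp_mk₀, Ext.comp_assoc _ _ _ (zero_add 0) (zero_add 1) (by norm_num)]
          have := hS.comp_extClass
          dsimp only at this
          rw [this, Ext.comp_zero]
        rw [← hcf, Ext.mk₀_smul, Ext.smul_comp] at h0
        have hc0 : c = 0 := (smul_eq_zero.1 h0).resolve_right ht
        rw [hc0, zero_smul] at hcf
        exact ⟨hS.exact.lift f hcf.symm, hS.exact.lift_f f hcf.symm⟩
    rw [← (LinearEquiv.ofBijective _ hbij).finrank_eq, hHom]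
  · intro x hx
    obtain ⟨z, rfl⟩ := Ext.covariant_sequence_exact₂ E hS x hx
    obtain ⟨c, rfl⟩ := hE1 _ z ht
    have := hS.extClass_comp
    rw [Ext.smul_comp, Ext.comp_assoc _ _ _ (zero_add 1) (add_zero 1) (by norm_num), this,
      Ext.comp_zero, smul_zero]

theorem aux_extSMul {A : Type u} [Category.{v} A] [Abelian A] [Linear ℂ A] [HasExt.{w} A]
    (c : ℂ) {X Y : A} {n : ℕ} (x : Ext X Y n) : extSMul c x = c • x := by
  rw [extSMul, Ext.mk₀_smul, Ext.smul_comp, Ext.mk₀_id_comp]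

/-- Let `A` be a `ℂ`-linear abelian category with finite-dimensional
Ext-groups and `E = F 0` an object with `dim Hom(E,E) = dim Ext¹(E,E) = dim Ext²(E,E) = 1`.
Given objects `E_n = F n` (`0 ≤ n ≤ m`, `m ≥ 1`) together with, for each `1 ≤ n ≤ m`
(indexed here by `j = n - 1 : Fin m`):
(i) short exact sequences `τ_n : 0 → E → E_n → E_{n-1} → 0` with `τ_1` non-split;
(ii) morphisms of short exact sequences `τ_1 → τ_n` with identity left vertical map;
(iii) non-split short exact sequences `σ_n : 0 → E_{n-1} → E_n → E → 0` whose classes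
`e'_n ∈ Ext¹(E,E_{n-1})` satisfy `η'_n (e'_n) = 0` for `n < m` and `η'_m (e'_m) ≠ 0`, where
`η'_n : Ext¹(E,E_{n-1}) → Ext²(E,E)` is the connecting homomorphism of `τ_n` for `Hom(E,-)`.
Then `dim Hom(E,E_m) = 1` and `Ext¹(E,E_m) = 0`. -/
theorem stmt_4 {A : Type u} [Category.{v} A] [Abelian A] [Linear ℂ A] [HasExt.{w} A]
    (hfd : ∀ (X Y : A) (n : ℕ), ExtIsFinDim X Y n)
    (m : ℕ) (hm : 0 < m) (F : ℕ → A)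
    (hHom : Module.finrank ℂ (F 0 ⟶ F 0) = 1)
    (hExt1 : ExtIsOneDim (F 0) (F 0) 1)
    (hExt2 : ExtIsOneDim (F 0) (F 0) 2)
    -- (i) the short exact sequences τ_{j+1} : 0 → F 0 → F (j+1) → F j → 0
    (ι' : ∀ j : Fin m, F 0 ⟶ F ((j : ℕ) + 1))
    (π' : ∀ j : Fin m, F ((j : ℕ) + 1) ⟶ F j)
    (hc' : ∀ j : Fin m, ι' j ≫ π' j = 0)
    (hτ : ∀ j : Fin m, (ShortComplex.mk (ι' j) (π' j) (hc' j)).ShortExact)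
    -- τ_1 is non-split
    (hτ₁ : ¬ Nonempty (ShortComplex.mk (ι' ⟨0, hm⟩) (π' ⟨0, hm⟩) (hc' ⟨0, hm⟩)).Splitting)
    -- (ii) morphisms of short exact sequences from τ_1 to τ_{j+1} with left vertical 𝟙
    (r : ∀ j : Fin m, F 1 ⟶ F ((j : ℕ) + 1))
    (t : ∀ j : Fin m, F 0 ⟶ F j)
    (hsq₁ : ∀ j : Fin m, ι' ⟨0, hm⟩ ≫ r j = ι' j)
    (hsq₂ : ∀ j : Fin m, r j ≫ π' j = π' ⟨0, hm⟩ ≫ t j)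
    -- (iii) the non-split short exact sequences σ_{j+1} : 0 → F j → F (j+1) → F 0 → 0
    (ι : ∀ j : Fin m, F j ⟶ F ((j : ℕ) + 1))
    (π : ∀ j : Fin m, F ((j : ℕ) + 1) ⟶ F 0)
    (hc : ∀ j : Fin m, ι j ≫ π j = 0)
    (hσ : ∀ j : Fin m, (ShortComplex.mk (ι j) (π j) (hc j)).ShortExact)
    (hσns : ∀ j : Fin m, ¬ Nonempty (ShortComplex.mk (ι j) (π j) (hc j)).Splitting)
    -- the obstructions η'_{j+1}(e'_{j+1}) vanish for j + 1 < m and are nonzero for j + 1 = m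
    (hobs : ∀ j : Fin m, (j : ℕ) + 1 < m →
      (hσ j).extClass.comp (hτ j).extClass (by norm_num) = (0 : Ext (F 0) (F 0) 2))
    (hobsm : ∀ j : Fin m, (j : ℕ) + 1 = m →
      (hσ j).extClass.comp (hτ j).extClass (by norm_num) ≠ (0 : Ext (F 0) (F 0) 2)) :
    Module.finrank ℂ (F 0 ⟶ F m) = 1 ∧
    (∀ x : Ext (F 0) (F m) 1, x = 0) := by
  have hE1 : ∀ x y : Ext (F 0) (F 0) 1, x ≠ 0 → ∃ c : ℂ, y = c • x := by
    intro x y hx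
    obtain ⟨e, -, he⟩ := hExt1
    obtain ⟨a, rfl⟩ := he x
    obtain ⟨b, rfl⟩ := he y
    simp only [aux_extSMul] at *
    have ha : a ≠ 0 := by
      rintro rfl
      simp at hx
    exact ⟨b / a, by rw [smul_smul, div_mul_cancel₀ _ ha]⟩
  have ht : ∀ j : Fin m, (Ext.mk₀ (t j)).comp (hτ j).extClass (zero_add 1) ≠ 0 := by
    intro j h0
    apply hτ₁
    apply aux_splitting (hτ ⟨0, hm⟩)
    let φ : ShortComplex.mk (ι' ⟨0, hm⟩) (π' ⟨0, hm⟩) (hc' ⟨0, hm⟩) ⟶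
        ShortComplex.mk (ι' j) (π' j) (hc' j) :=
      { τ₁ := 𝟙 (F 0)
        τ₂ := r j
        τ₃ := t j
        comm₁₂ := (Category.id_comp _).trans (hsq₁ j).symm
        comm₂₃ := hsq₂ j }
    have h1 := ShortComplex.ShortExact.extClass_naturality (hτ ⟨0, hm⟩) (hτ j) φ
    have h2 : (hτ ⟨0, hm⟩).extClass.comp (Ext.mk₀ (𝟙 (F 0))) (add_zero 1) = 0 := h1.trans h0
    exact (Ext.comp_mk₀_id _).symm.trans h2
  have key : ∀ n : ℕ, n ≤ m → Module.finrank ℂ (F 0 ⟶ F n) = 1 ∧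
      ∀ x y : Ext (F 0) (F n) 1, x ≠ 0 → ∃ c : ℂ, y = c • x := by
    intro n
    induction n with
    | zero => exact fun _ => ⟨hHom, hE1⟩
    | succ n ih =>
      intro hn
      obtain ⟨ih1, ih2⟩ := ih (by omega)
      obtain ⟨h1, h2⟩ := aux_step _ _ _ (hτ ⟨n, hn⟩) (t ⟨n, hn⟩) (ht ⟨n, hn⟩) hHom hE1 ih1
      refine ⟨h1, fun x y hx => ?_⟩
      obtain ⟨c, hcy⟩ := ih2 (x.comp (Ext.mk₀ (π' ⟨n, hn⟩)) (add_zero 1))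
        (y.comp (Ext.mk₀ (π' ⟨n, hn⟩)) (add_zero 1)) (fun h => hx (h2 x h))
      refine ⟨c, sub_eq_zero.1 (h2 _ ?_)⟩
      rw [sub_eq_add_neg, Ext.add_comp, Ext.neg_comp, Ext.smul_comp, hcy, add_neg_cancel]
  refine ⟨(key m le_rfl).1, ?_⟩
  obtain ⟨n, rfl⟩ : ∃ n, m = n + 1 := ⟨m - 1, by omega⟩
  obtain ⟨k1, k2⟩ := key n (by omega)
  have hn : n < n + 1 := by omega
  obtain ⟨h1, h2⟩ := aux_step _ _ _ (hτ ⟨n, hn⟩) (t ⟨n, hn⟩) (ht ⟨n, hn⟩) hHom hE1 k1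
  intro x
  apply h2
  have hob := hobsm ⟨n, hn⟩ rfl
  have he : (hσ ⟨n, hn⟩).extClass ≠ 0 := by
    intro h
    rw [h, Ext.zero_comp] at hob
    exact hob rfl
  obtain ⟨c, hcx⟩ := k2 _ (x.comp (Ext.mk₀ (π' ⟨n, hn⟩)) (add_zero 1)) he
  have h0 : (x.comp (Ext.mk₀ (π' ⟨n, hn⟩)) (add_zero 1)).comp (hτ ⟨n, hn⟩).extClass
      (show 1 + 1 = 2 by norm_num) = 0 := by
    rw [Ext.comp_assoc _ _ _ (add_zero 1) (zero_add 1) (by norm_num)]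
    have := (hτ ⟨n, hn⟩).comp_extClass
    dsimp only at this
    rw [this, Ext.comp_zero]
  rw [hcx, Ext.smul_comp] at h0
  rw [hcx, (smul_eq_zero.1 h0).resolve_right hob, zero_smul]
end

section
/- Let D be a ℂ-linear pretriangulated category with shift functors ⟦n⟧, let n ≥ 1, let E be an object and h : E → E⟦2⟧ a morphism. For j ≥ 0 write h^j : E → E⟦2j⟧ for the j-fold composite h⟦2(j−1)⟧ ∘ ⋯ ∘ h⟦2⟧ ∘ h (with h^0 = 𝟙_E). Assume: Hom(E, E⟦i⟧) = 0 unless i is even with 0 ≤ i ≤ 2n, and for each 0 ≤ j ≤ n the ℂ-vector space Hom(E, E⟦2j⟧) is one-dimensional spanned by h^j (in particular h^j ≠ 0). Let E⟦1⟧ → F → E ⟶h E⟦2⟧ be a distinguished triangle. Then dim_ℂ Hom(F, E) = 1, dim_ℂ Hom(F, E⟦2n+1⟧) = 1, and Hom(F, E⟦i⟧) = 0 for all integers i ∉ {0, 2n+1}. -/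
open CategoryTheory Pretriangulated

universe v u

/-- The `j`-fold composite `h^j = h⟦2(j-1)⟧' ∘ ⋯ ∘ h⟦2⟧' ∘ h : E ⟶ E⟦2j⟧` of a morphism
`h : E ⟶ E⟦2⟧` (with `h^0 = 𝟙 E`), formed using the composition of shifted morphisms. -/
noncomputable def shiftedPow {D : Type u} [Category.{v} D] [HasShift D ℤ]
    {E : D} (h : E ⟶ E⟦(2 : ℤ)⟧) : ∀ j : ℕ, E ⟶ E⟦((2 * j : ℕ) : ℤ)⟧
  | 0 => ShiftedHom.mk₀ ((2 * 0 : ℕ) : ℤ) (by norm_num) (𝟙 E)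
  | (j + 1) => ShiftedHom.comp (X := E) (Y := E) (Z := E) (a := ((2 * j : ℕ) : ℤ))
      (b := (2 : ℤ)) (shiftedPow h j) h (by push_cast; ring)

lemma shiftedPow_comm {D : Type u} [Category.{v} D] [HasShift D ℤ]
    {E : D} (h : E ⟶ E⟦(2 : ℤ)⟧) (j : ℕ) :
    ShiftedHom.comp (X := E) (Y := E) (Z := E) (a := (2 : ℤ)) (b := ((2 * j : ℕ) : ℤ))
      (c := ((2 * (j + 1) : ℕ) : ℤ)) h (shiftedPow h j) (by push_cast; ring)
      = shiftedPow h (j + 1) := by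
  induction j with
  | zero =>
    simp only [shiftedPow]
    rw [ShiftedHom.mk₀_id_comp, ShiftedHom.comp_mk₀_id]
  | succ j ih =>
    rw [shiftedPow, ← ShiftedHom.comp_assoc (a₁₂ := ((2 * (j + 1) : ℕ) : ℤ)), ih, ← shiftedPow]
    all_goals (push_cast; ring)

section

variable {D : Type u} [Category.{v} D] [HasShift D ℤ]

/-- The double shift of a morphism out of E, up to canonical isomorphisms. -/
noncomputable def shTwo {E : D} (j i : ℤ) (hij : j + 2 = i) (φ : E ⟶ E⟦j⟧) :
    E⟦(2 : ℤ)⟧ ⟶ E⟦i⟧ :=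
  φ⟦(2 : ℤ)⟧' ≫ (shiftFunctorAdd' D j 2 i hij).inv.app E

lemma shTwo_surj {E : D} (j i : ℤ) (hij : j + 2 = i) (k : E⟦(2 : ℤ)⟧ ⟶ E⟦i⟧) :
    ∃ φ, shTwo j i hij φ = k := by
  obtain ⟨φ, hφ⟩ := (shiftFunctor D (2 : ℤ)).map_surjective
    (k ≫ (shiftFunctorAdd' D j 2 i hij).hom.app E)
  exact ⟨φ, by simp [shTwo, hφ]⟩

/-- The shift of a morphism out of the first shift of E, up to canonical isomorphisms. -/
noncomputable def shOne {E : D} (i i' : ℤ) (hi : i + 1 = i') (g : E⟦(1 : ℤ)⟧ ⟶ E⟦i⟧) :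
    E⟦(2 : ℤ)⟧ ⟶ E⟦i'⟧ :=
  (shiftFunctorAdd' D (1 : ℤ) 1 2 (by norm_num)).hom.app E ≫ g⟦(1 : ℤ)⟧' ≫
    (shiftFunctorAdd' D i 1 i' hi).inv.app E

lemma shOne_surj {E : D} (i i' : ℤ) (hi : i + 1 = i') (k : E⟦(2 : ℤ)⟧ ⟶ E⟦i'⟧) :
    ∃ g, shOne i i' hi g = k := by
  obtain ⟨g, hg⟩ := (shiftFunctor D (1 : ℤ)).map_surjective
    ((shiftFunctorAdd' D (1 : ℤ) 1 2 (by norm_num)).inv.app E ≫ k ≫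
      (shiftFunctorAdd' D i 1 i' hi).hom.app E)
  exact ⟨g, by simp [shOne, hg]⟩

lemma shOne_inj {E : D} (i i' : ℤ) (hi : i + 1 = i') (g g' : E⟦(1 : ℤ)⟧ ⟶ E⟦i⟧)
    (H : shOne i i' hi g = shOne i i' hi g') : g = g' := by
  apply (shiftFunctor D (1 : ℤ)).map_injective
  rw [← cancel_mono ((shiftFunctorAdd' D i 1 i' hi).inv.app E)]
  simpa [shOne] using H

variable [Preadditive D] [Linear ℂ D] [∀ n : ℤ, (shiftFunctor D n).Additive]
    [∀ n : ℤ, (shiftFunctor D n).Linear ℂ]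

lemma shTwo_smul {E : D} (j i : ℤ) (hij : j + 2 = i) (c : ℂ) (φ : E ⟶ E⟦j⟧) :
    shTwo j i hij (c • φ) = c • shTwo j i hij φ := by
  simp [shTwo, Functor.map_smul]

lemma shOne_smul {E : D} (i i' : ℤ) (hi : i + 1 = i') (c : ℂ) (g : E⟦(1 : ℤ)⟧ ⟶ E⟦i⟧) :
    shOne i i' hi (c • g) = c • shOne i i' hi g := by
  simp [shOne, Functor.map_smul]

lemma shOne_zero {E : D} (i i' : ℤ) (hi : i + 1 = i') :
    shOne i i' hi (0 : E⟦(1 : ℤ)⟧ ⟶ E⟦i⟧) = 0 := by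
  simp [shOne]

end

/-- Let `D` be a `ℂ`-linear pretriangulated category, `n ≥ 1`, and
`E` an object with a morphism `h : E ⟶ E⟦2⟧` such that `Hom(E, E⟦i⟧)` vanishes unless
`i = 2j` with `0 ≤ j ≤ n`, in which case it is one-dimensional spanned by `h^j`
(so that `⊕ᵢ Hom(E, E⟦i⟧) ≅ H^*(ℙⁿ, ℂ)`, i.e. `E` is a `ℙⁿ`-object). If
`E⟦1⟧ ⟶ F ⟶ E ⟶ʰ E⟦2⟧` is a distinguished triangle, then `Hom(F, E)` and
`Hom(F, E⟦2n+1⟧)` are one-dimensional, and `Hom(F, E⟦i⟧) = 0` for `i ∉ {0, 2n+1}`. -/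
theorem stmt_6 {D : Type u} [Category.{v} D] [Limits.HasZeroObject D] [HasShift D ℤ]
    [Preadditive D] [Linear ℂ D] [∀ n : ℤ, (shiftFunctor D n).Additive]
    [∀ n : ℤ, (shiftFunctor D n).Linear ℂ] [Pretriangulated D]
    (n : ℕ) (hn : 1 ≤ n) (E : D) (h : E ⟶ E⟦(2 : ℤ)⟧)
    (hvanish : ∀ i : ℤ, (¬ ∃ j : ℕ, j ≤ n ∧ i = 2 * j) → ∀ φ : E ⟶ E⟦i⟧, φ = 0)
    (hpow_ne : ∀ j : ℕ, j ≤ n → shiftedPow h j ≠ 0)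
    (hspan : ∀ (j : ℕ), j ≤ n → ∀ φ : E ⟶ E⟦((2 * j : ℕ) : ℤ)⟧,
      ∃ c : ℂ, φ = c • shiftedPow h j)
    (F : D) (α : E⟦(1 : ℤ)⟧ ⟶ F) (β : F ⟶ E)
    (hT : Triangle.mk α β (h ≫ (shiftFunctorAdd' D 1 1 2 (by norm_num)).hom.app E)
      ∈ distTriang D) :
    Module.finrank ℂ (F ⟶ E) = 1 ∧
    Module.finrank ℂ (F ⟶ E⟦(2 * n + 1 : ℤ)⟧) = 1 ∧
    (∀ i : ℤ, i ≠ 0 → i ≠ 2 * n + 1 → ∀ φ : F ⟶ E⟦i⟧, φ = 0) := by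
  have hδ (X : D) (k : E⟦(2 : ℤ)⟧ ⟶ X) : β ≫ h ≫ k = 0 := by
    have h0 : β ≫ h ≫ (shiftFunctorAdd' D (1 : ℤ) 1 2 (by norm_num)).hom.app E = 0 :=
      comp_distTriang_mor_zero₂₃ _ hT
    have h1 : β ≫ h = 0 := by
      rw [← cancel_mono ((shiftFunctorAdd' D (1 : ℤ) 1 2 (by norm_num)).hom.app E)]
      simpa using h0
    rw [← Category.assoc, h1, Limits.zero_comp]
  -- exactness at `Hom(E, X)`
  have ex3 (X : D) (ψ : E ⟶ X) (hψ : β ≫ ψ = 0) : ∃ k : E⟦(2 : ℤ)⟧ ⟶ X, ψ = h ≫ k := by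
    obtain ⟨g, hg⟩ := Triangle.yoneda_exact₃ _ hT ψ hψ
    exact ⟨(shiftFunctorAdd' D (1 : ℤ) 1 2 (by norm_num)).hom.app E ≫ g, by
      rw [hg]; exact Category.assoc _ _ _⟩
  -- exactness at `Hom(F, X)`
  have ex2 (X : D) (f : F ⟶ X) (hf : α ≫ f = 0) : ∃ ψ : E ⟶ X, f = β ≫ ψ :=
    Triangle.yoneda_exact₂ _ hT f hf
  have hδα (i i' : ℤ) (hi : i + 1 = i') (f : F ⟶ E⟦i⟧) : h ≫ shOne i i' hi (α ≫ f) = 0 := by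
    have h0 : (h ≫ (shiftFunctorAdd' D (1 : ℤ) 1 2 (by norm_num)).hom.app E) ≫ α⟦(1 : ℤ)⟧' = 0 :=
      comp_distTriang_mor_zero₃₁ _ hT
    have h1 := h0 =≫ (f⟦(1 : ℤ)⟧' ≫ (shiftFunctorAdd' D i 1 i' hi).inv.app E)
    simpa [shOne] using h1
  -- exactness at `Hom(E⟦1⟧, X)`
  have ex1 (i i' : ℤ) (hi : i + 1 = i') (g : E⟦(1 : ℤ)⟧ ⟶ E⟦i⟧)
      (hg : h ≫ shOne i i' hi g = 0) : ∃ f : F ⟶ E⟦i⟧, g = α ≫ f := by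
    have h0 : (h ≫ (shiftFunctorAdd' D (1 : ℤ) 1 2 (by norm_num)).hom.app E) ≫ g⟦(1 : ℤ)⟧' = 0 := by
      rw [← cancel_mono ((shiftFunctorAdd' D i 1 i' hi).inv.app E)]
      simpa [shOne] using hg
    obtain ⟨(k : F⟦(1 : ℤ)⟧ ⟶ E⟦i⟧⟦(1 : ℤ)⟧), hk⟩ := Triangle.yoneda_exact₃ _ (rot_of_distTriang _ hT) (g⟦(1 : ℤ)⟧') h0
    have hk' : g⟦(1 : ℤ)⟧' = (-(α⟦(1 : ℤ)⟧')) ≫ k := hk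
    obtain ⟨f, rfl⟩ := (shiftFunctor D (1 : ℤ)).map_surjective k
    refine ⟨-f, (shiftFunctor D (1 : ℤ)).map_injective ?_⟩
    rw [hk']
    simp
  have hcomp (j i : ℤ) (hij : j + 2 = i) (φ : E ⟶ E⟦j⟧) :
      h ≫ shTwo j i hij φ = ShiftedHom.comp (X := E) (Y := E) (Z := E) h φ hij := rfl
  have hA (i : ℤ) (hi : i ≠ 2 * n + 2) (k : E⟦(2 : ℤ)⟧ ⟶ E⟦i⟧) (hk : h ≫ k = 0) : k = 0 := by
    obtain ⟨j, rfl⟩ : ∃ j, i = j + 2 := ⟨i - 2, by ring⟩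
    obtain ⟨φ, rfl⟩ := shTwo_surj j _ rfl k
    suffices φ = 0 by subst this; simp [shTwo]
    by_cases hj : ∃ m : ℕ, m ≤ n ∧ j = 2 * m
    · obtain ⟨m, hm, hjm⟩ := hj
      obtain rfl : j = ((2 * m : ℕ) : ℤ) := by rw [hjm]; push_cast; ring
      obtain ⟨c, rfl⟩ := hspan m hm φ
      have key : ∀ (i : ℤ) (hi : ((2 * m : ℕ) : ℤ) + 2 = i), i = ((2 * (m + 1) : ℕ) : ℤ) →
          h ≫ shTwo _ i hi (c • shiftedPow h m) = 0 → c = 0 := by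
        rintro i hi rfl h0
        rw [hcomp, ShiftedHom.comp_smul, shiftedPow_comm] at h0
        exact (smul_eq_zero.1 h0).resolve_right (hpow_ne _ (by push_cast at *; omega))
      rw [key _ rfl (by push_cast; ring) hk, zero_smul]
    · exact hvanish j hj φ
  have hB (i : ℤ) (hi : i ≠ 0) (ψ : E ⟶ E⟦i⟧) : ∃ k : E⟦(2 : ℤ)⟧ ⟶ E⟦i⟧, ψ = h ≫ k := by
    by_cases hj : ∃ m : ℕ, m ≤ n ∧ i = 2 * m
    · obtain ⟨m, hm, him⟩ := hj
      obtain _ | m := m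
      · simp at him; contradiction
      obtain rfl : i = ((2 * (m + 1) : ℕ) : ℤ) := by rw [him]; push_cast; ring
      obtain ⟨c, rfl⟩ := hspan (m + 1) hm ψ
      refine ⟨shTwo ((2 * m : ℕ) : ℤ) _ (by push_cast; ring) (c • shiftedPow h m), ?_⟩
      rw [hcomp, ShiftedHom.comp_smul, shiftedPow_comm]
    · exact ⟨0, by rw [hvanish i hj ψ, Limits.comp_zero]⟩
  have hαf (i : ℤ) (hi : i ≠ 2 * n + 1) (f : F ⟶ E⟦i⟧) : α ≫ f = 0 := by
    apply shOne_inj i (i + 1) rfl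
    rw [shOne_zero]
    exact hA _ (by omega) _ (hδα _ _ _ _)
  refine ⟨?_, ?_, ?_⟩
  · let e := (shiftFunctorZero' D (((2 * 0 : ℕ) : ℤ)) (by norm_num)).app E
    have hid (ψ : E ⟶ E) : ∃ c : ℂ, ψ = c • 𝟙 E := by
      obtain ⟨c, hc⟩ := hspan 0 (Nat.zero_le _) (ψ ≫ e.inv)
      refine ⟨c, ?_⟩
      rw [← cancel_mono e.inv, hc]
      simp [shiftedPow, ShiftedHom.mk₀, e]
    rw [finrank_eq_one_iff']
    refine ⟨β, ?_, ?_⟩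
    · intro hβ
      obtain ⟨k, hk⟩ := ex3 _ e.inv (by rw [hβ, Limits.zero_comp])
      obtain ⟨φ, rfl⟩ := shTwo_surj (-2) _ (by norm_num) k
      rw [hvanish (-2) (by rintro ⟨j, -, hj⟩; omega) φ] at hk
      apply hpow_ne 0 (Nat.zero_le _)
      have : shiftedPow h 0 = e.inv := by simp [shiftedPow, ShiftedHom.mk₀, e]
      rw [this, hk]
      simp [shTwo]
    · intro f
      have h0 : α ≫ f = 0 := by
        rw [← cancel_mono e.inv, Category.assoc, Limits.zero_comp]
        exact hαf _ (by push_cast; omega) _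
      obtain ⟨ψ, rfl⟩ := ex2 _ f h0
      obtain ⟨c, rfl⟩ := hid ψ
      exact ⟨c, by simp⟩
  · have hinj (f f' : F ⟶ E⟦(2 * n + 1 : ℤ)⟧) (hff : α ≫ f = α ≫ f') : f = f' := by
      rw [← sub_eq_zero]
      obtain ⟨ψ, hψ⟩ := ex2 _ (f - f') (by rw [Preadditive.comp_sub, hff, sub_self])
      rw [hψ, hvanish _ (by rintro ⟨j, -, hj⟩; omega) ψ, Limits.comp_zero]
    have e1 : (2 * n + 1 : ℤ) + 1 = 2 * n + 2 := by ring
    have e2 : ((2 * n : ℕ) : ℤ) + 2 = 2 * n + 2 := by push_cast; ring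
    obtain ⟨g, hg⟩ := shOne_surj _ _ e1 (shTwo _ _ e2 (shiftedPow h n))
    obtain ⟨f₀, rfl⟩ := ex1 _ _ e1 g
      (hvanish _ (by rintro ⟨j, hjn, hj⟩; omega) _)
    rw [finrank_eq_one_iff']
    refine ⟨f₀, ?_, ?_⟩
    · rintro rfl
      rw [Limits.comp_zero, shOne_zero] at hg
      apply hpow_ne n le_rfl
      apply (shiftFunctor D (2 : ℤ)).map_injective
      rw [← cancel_mono ((shiftFunctorAdd' D _ 2 _ e2).inv.app E)]
      simpa [shTwo] using hg.symm
    · intro f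
      obtain ⟨φ, hφ⟩ := shTwo_surj _ _ e2 (shOne _ _ e1 (α ≫ f))
      obtain ⟨c, rfl⟩ := hspan n le_rfl φ
      refine ⟨c, hinj _ _ (shOne_inj _ _ e1 _ _ ?_)⟩
      rw [← hφ, Linear.comp_smul, shOne_smul, hg, shTwo_smul]
  · intro i hi0 hi1 f
    obtain ⟨ψ, rfl⟩ := ex2 _ f (hαf i hi1 f)
    obtain ⟨k, rfl⟩ := hB i hi0 ψ
    exact hδ _ k
end

section
/- Let D be a ℂ-linear pretriangulated category with shift functors ⟦n⟧, and let X be an object with dim_ℂ Hom(X, X⟦1⟧) = 1 and dim_ℂ Hom(X, X⟦2⟧) = 1. Let A ⟶a B ⟶b X ⟶e' A⟦1⟧ be a distinguished triangle. Define ξ : Hom(A, X) → Hom(X, X⟦1⟧) by ξ(φ) = φ⟦1⟧ ∘ e' and η : Hom(A, X⟦1⟧) → Hom(X, X⟦2⟧) by η(ψ) = ψ⟦1⟧ ∘ e'. Assume ξ is surjective, dim_ℂ Hom(A, X⟦1⟧) = 1 with spanning element e, and η(e) ≠ 0. Then Hom(B, X⟦1⟧) = 0. -/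
open CategoryTheory Pretriangulated

universe v u

/-- Let `D` be a `ℂ`-linear pretriangulated category and `X` an object
with `dim Hom(X, X⟦1⟧) = dim Hom(X, X⟦2⟧) = 1`. Let `A ⟶ B ⟶ X ⟶ᵉ' A⟦1⟧` be a
distinguished triangle, and define `ξ : Hom(A,X) → Hom(X,X⟦1⟧)`, `φ ↦ φ⟦1⟧ ∘ e'`, and
`η : Hom(A,X⟦1⟧) → Hom(X,X⟦2⟧)`, `ψ ↦ ψ⟦1⟧ ∘ e'`. If `ξ` is surjective,
`Hom(A,X⟦1⟧)` is one-dimensional spanned by `e`, and `η e ≠ 0`, then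
`Hom(B, X⟦1⟧) = 0`. -/
theorem stmt_8 {D : Type u} [Category.{v} D] [Limits.HasZeroObject D] [HasShift D ℤ]
    [Preadditive D] [Linear ℂ D] [∀ n : ℤ, (shiftFunctor D n).Additive]
    [∀ n : ℤ, (shiftFunctor D n).Linear ℂ] [Pretriangulated D]
    (X : D)
    (hX1 : Module.finrank ℂ (X ⟶ X⟦(1 : ℤ)⟧) = 1)
    (hX2 : Module.finrank ℂ (X ⟶ X⟦(2 : ℤ)⟧) = 1)
    {A B : D} (a : A ⟶ B) (b : B ⟶ X) (e' : X ⟶ A⟦(1 : ℤ)⟧)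
    (hT : Triangle.mk a b e' ∈ distTriang D)
    (hξ : Function.Surjective (fun φ : A ⟶ X => e' ≫ φ⟦(1 : ℤ)⟧'))
    (e : A ⟶ X⟦(1 : ℤ)⟧)
    (hdim : Module.finrank ℂ (A ⟶ X⟦(1 : ℤ)⟧) = 1)
    (hspan : ∀ ψ : A ⟶ X⟦(1 : ℤ)⟧, ∃ c : ℂ, ψ = c • e)
    (hη : e' ≫ e⟦(1 : ℤ)⟧' ≫ (shiftFunctorAdd' D 1 1 2 (by norm_num)).inv.app X ≠ 0) :
    ∀ φ : B ⟶ X⟦(1 : ℤ)⟧, φ = 0 := by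
  intro φ
  have h31 : e' ≫ a⟦(1 : ℤ)⟧' = 0 := comp_distTriang_mor_zero₃₁ _ hT
  have h23 : b ≫ e' = 0 := comp_distTriang_mor_zero₂₃ _ hT
  obtain ⟨c, hc⟩ := hspan (a ≫ φ)
  have hz : c • (e' ≫ e⟦(1 : ℤ)⟧') = 0 := by
    rw [← Linear.comp_smul, ← Functor.map_smul, ← hc, Functor.map_comp, ← Category.assoc, h31,
      Limits.zero_comp]
  have hc0 : c = 0 := by
    rcases smul_eq_zero.mp hz with h | h
    · exact h
    · exact absurd (by rw [← Category.assoc, h, Limits.zero_comp]) hη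
  have haφ : a ≫ φ = 0 := by rw [hc, hc0, zero_smul]
  obtain ⟨g, hg⟩ := Triangle.yoneda_exact₂ _ hT φ haφ
  obtain ⟨ψ, hψ⟩ := hξ g
  have hg' : φ = b ≫ g := hg
  rw [hg', ← hψ]
  change b ≫ e' ≫ _ = 0
  rw [← Category.assoc, h23, Limits.zero_comp]
end
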